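/- Let Z be a nonempty finite type, let q_θ be a probability vector on Z with full support, let A : Z → ℝ, let β > 0 and ε ∈ ℝ. Define the dual function G : (0,∞) → ℝ by G(η) = (η+β) · log ∑_z exp((A z + η·log(q_θ z))/(η+β)) + η·ε, and for each η > 0 define the Gibbs distribution q*_η(z) = exp((A z + η·log(q_θ z))/(η+β)) / ∑_{z'} exp((A z' + η·log(q_θ z'))/(η+β)). Then for every η₀ > 0, G is differentiable at η₀ with derivative G'(η₀) = ε − KL(q*_{η₀}‖q_θ). -/

import Mathlib

/-!
Write `G(η) = s · log ∑ exp (v / s) + η ε` with `s = η + β` and `v = A + η log q_θ`: up to a linear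
term, `G` is the perspective of log-sum-exp along an affine curve. The gradient of log-sum-exp at
`u = v / s` is the Gibbs distribution `p`, and `log p = u - log ∑ exp u`. Since `s u' = v' - s' u`,
the perspective has derivative `s' log ∑ exp u + ∑ p (v' - s' u) = ∑ p (v' - s' log p)`. Here
`s' = 1` and `v' = log q_θ`, so this is `-KL(p‖q_θ)`.
-/

open Real

section LogSumExp

variable {ι : Type*} [Fintype ι]

/-- The log-partition function `log ∑ i, exp (u i)` of a finite family of energies `u`. -/
noncomputable def logSumExp (u : ι → ℝ) : ℝ :=
  log (∑ i, exp (u i))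

/-- The Gibbs distribution with weights proportional to `exp (u i)`. -/
noncomputable def softmax (u : ι → ℝ) (i : ι) : ℝ :=
  exp (u i) / ∑ j, exp (u j)

theorem sum_exp_pos [Nonempty ι] (u : ι → ℝ) : 0 < ∑ i, exp (u i) :=
  Finset.sum_pos (fun i _ => exp_pos (u i)) Finset.univ_nonempty

theorem softmax_pos (u : ι → ℝ) (i : ι) : 0 < softmax u i :=
  have : Nonempty ι := ⟨i⟩
  div_pos (exp_pos (u i)) (sum_exp_pos u)

theorem sum_softmax [Nonempty ι] (u : ι → ℝ) : ∑ i, softmax u i = 1 := by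
  simp only [softmax, ← Finset.sum_div]
  exact div_self (sum_exp_pos u).ne'

theorem log_softmax (u : ι → ℝ) (i : ι) : log (softmax u i) = u i - logSumExp u := by
  have : Nonempty ι := ⟨i⟩
  rw [softmax, log_div (exp_ne_zero _) (sum_exp_pos u).ne', log_exp, logSumExp]

theorem logSumExp_eq_sum_softmax [Nonempty ι] (u : ι → ℝ) :
    logSumExp u = ∑ i, softmax u i * (u i - log (softmax u i)) := by
  simp only [log_softmax, sub_sub_cancel, ← Finset.sum_mul, sum_softmax, one_mul]

theorem hasDerivAt_logSumExp [Nonempty ι] {u : ℝ → ι → ℝ} {u' : ι → ℝ} {x : ℝ}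
    (hu : HasDerivAt u u' x) :
    HasDerivAt (fun t => logSumExp (u t)) (∑ i, softmax (u x) i * u' i) x := by
  have hsum : HasDerivAt (fun t => ∑ i, exp (u t i)) (∑ i, exp (u x i) * u' i) x :=
    HasDerivAt.fun_sum fun i _ => (hasDerivAt_pi.1 hu i).exp
  refine (hsum.log (sum_exp_pos (u x)).ne').congr_deriv ?_
  simp only [softmax, Finset.sum_div, div_mul_eq_mul_div]

theorem hasDerivAt_mul_logSumExp_div [Nonempty ι] {s : ℝ → ℝ} {s' : ℝ} {v : ℝ → ι → ℝ}
    {v' : ι → ℝ} {x : ℝ} (hs : HasDerivAt s s' x) (hv : HasDerivAt v v' x) (hx : s x ≠ 0)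
    {p : ι → ℝ} (hp : p = softmax fun i => v x i / s x) :
    HasDerivAt (fun t => s t * logSumExp fun i => v t i / s t)
      (∑ i, p i * (v' i - s' * log (p i))) x := by
  subst hp
  set u : ι → ℝ := fun i => v x i / s x with hu
  have hdiv : HasDerivAt (fun t i => v t i / s t) (fun i => (v' i - s' * u i) / s x) x :=
    hasDerivAt_pi.2 fun i => ((hasDerivAt_pi.1 hv i).fun_div hs hx).congr_deriv <| by
      simp only [hu]
      field_simp
  refine (hs.fun_mul (hasDerivAt_logSumExp hdiv)).congr_deriv ?_
  calc
    s' * logSumExp u + s x * ∑ i, softmax u i * ((v' i - s' * u i) / s x)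
      = ∑ i, (s' * (softmax u i * (u i - log (softmax u i))) +
          s x * (softmax u i * ((v' i - s' * u i) / s x))) := by
        rw [logSumExp_eq_sum_softmax, Finset.mul_sum, Finset.mul_sum, Finset.sum_add_distrib]
    _ = ∑ i, softmax u i * (v' i - s' * log (softmax u i)) :=
        Finset.sum_congr rfl fun i _ => by
          field_simp
          ring

end LogSumExp

theorem daps_dual_derivative_general {Z : Type*} [Fintype Z] [Nonempty Z]
    {q : Z → ℝ} (hq : ∀ z, 0 < q z) (A : Z → ℝ) {β η₀ : ℝ} (ε : ℝ) (hη₀ : η₀ + β ≠ 0)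
    {p : Z → ℝ} (hp : p = softmax fun z => (A z + η₀ * log (q z)) / (η₀ + β)) :
    HasDerivAt
      (fun η => (η + β) * logSumExp (fun z => (A z + η * log (q z)) / (η + β)) + η * ε)
      (ε - ∑ z, p z * log (p z / q z)) η₀ := by
  have hs : HasDerivAt (fun η => η + β) 1 η₀ := (hasDerivAt_id' η₀).add_const β
  have hv : HasDerivAt (fun η z => A z + η * log (q z)) (fun z => log (q z)) η₀ :=
    hasDerivAt_pi.2 fun z => (hasDerivAt_mul_const (log (q z))).const_add (A z)
  have hlog (z : Z) : log (p z / q z) = log (p z) - log (q z) :=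
    log_div (hp ▸ (softmax_pos _ z).ne') (hq z).ne'
  refine ((hasDerivAt_mul_logSumExp_div hs hv hη₀ hp).fun_add
    (hasDerivAt_mul_const ε)).congr_deriv ?_
  simp only [hlog, one_mul, mul_sub, Finset.sum_sub_distrib]
  ring

/-- The dual function
`G(η) = (η+β)·log ∑_z exp((A z + η·log(q_θ z))/(η+β)) + η·ε`
is differentiable at every `η₀ > 0`, with derivative `ε − KL(q*_{η₀}‖q_θ)` where
`q*_{η₀}` is the Gibbs distribution at `η₀`. -/
theorem daps_dual_derivative {Z : Type*} [Fintype Z] [Nonempty Z]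
    (qθ : Z → ℝ) (hqθ0 : ∀ z, 0 < qθ z) (hqθ1 : ∑ z, qθ z = 1)
    (A : Z → ℝ) (β ε : ℝ) (hβ : 0 < β)
    (η₀ : ℝ) (hη₀ : 0 < η₀)
    (qstar : Z → ℝ)
    (hqstar : qstar = fun z => Real.exp ((A z + η₀ * Real.log (qθ z)) / (η₀ + β)) /
        ∑ z', Real.exp ((A z' + η₀ * Real.log (qθ z')) / (η₀ + β))) :
    HasDerivAt
      (fun η : ℝ =>
        (η + β) * Real.log (∑ z, Real.exp ((A z + η * Real.log (qθ z)) / (η + β))) + η * ε)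
      (ε - ∑ z, qstar z * Real.log (qstar z / qθ z)) η₀ :=
  daps_dual_derivative_general hqθ0 A ε (add_pos hη₀ hβ).ne' hqstar
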